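/- For each i ∈ ℕ let φ_i denote the identity isomorphism of the subgroup 2^iℤ ≤ ℤ onto itself, and let ℤ∗_{φ_i} be the corresponding HNN extension of ℤ (with both associated subgroups equal to 2^iℤ). For each i ≥ 1 let λ̄_i : ℤ∗_{φ_i} → ℤ∗_{φ_{i−1}} be the homomorphism induced by the identity map of ℤ (so λ̄_i restricts to the identity on ℤ and sends stable letter to stable letter). Then every λ̄_i is surjective but not injective, and consequently the inverse sequence {ℤ∗_{φ_i}, λ̄_i} is not pro-monomorphic. -/

import Mathlib

universe u

/-- The composite bonding homomorphism `λ_{i,j} : G_j →* G_i` of an inverse sequence of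
groups, for `i ≤ j`. -/
def invSeqComp {G : ℕ → Type u} [∀ i, Group (G i)] (lam : ∀ i, G (i + 1) →* G i)
    {i j : ℕ} (h : i ≤ j) : G j →* G i :=
  Nat.leRecOn h (fun {k} f => f.comp (lam k)) (MonoidHom.id (G i))

/-- An inverse sequence of groups is **pro-monomorphic** if there exists `i` such that for
every `j ≥ i` there exists `k₀ ≥ j` with `ker (λ_{i,k}) = ker (λ_{j,k})` for all `k ≥ k₀`. -/
def ProMono {G : ℕ → Type u} [∀ i, Group (G i)] (lam : ∀ i, G (i + 1) →* G i) : Prop :=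
  ∃ i : ℕ, ∀ j : ℕ, ∀ hij : i ≤ j, ∃ k₀ : ℕ, ∃ hjk₀ : j ≤ k₀, ∀ k : ℕ, ∀ hk₀k : k₀ ≤ k,
    (invSeqComp lam (hij.trans (hjk₀.trans hk₀k))).ker =
      (invSeqComp lam (hjk₀.trans hk₀k)).ker

/-- An inverse sequence of groups is **semistable** (Mittag-Leffler) if for every `i` there
exists `j ≥ i` such that `Im (λ_{i,k}) = Im (λ_{i,j})` for all `k ≥ j`. -/
def Semistable {G : ℕ → Type u} [∀ i, Group (G i)] (lam : ∀ i, G (i + 1) →* G i) : Prop :=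
  ∀ i : ℕ, ∃ j : ℕ, ∃ hij : i ≤ j, ∀ k : ℕ, ∀ hjk : j ≤ k,
    (invSeqComp lam (hij.trans hjk)).range = (invSeqComp lam hij).range

/-- An inverse sequence of groups is **stable** if it is pro-monomorphic and semistable. -/
def Stable {G : ℕ → Type u} [∀ i, Group (G i)] (lam : ∀ i, G (i + 1) →* G i) : Prop :=
  ProMono lam ∧ Semistable lam

/-- The subgroup `2^iℤ` of `ℤ` (written multiplicatively). -/
def twoPowSubgroup (i : ℕ) : Subgroup (Multiplicative ℤ) :=
  Subgroup.zpowers (Multiplicative.ofAdd ((2 : ℤ) ^ i))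

/-!
By Britton's lemma, `t * g * t⁻¹` lies in the base group of an HNN extension `G∗_φ`, `φ : A ≃* B`,
only if `g ∈ A`. If `G∗_φ → G∗_ψ` fixes `G` and `t`, and `g` lies in the domain of `ψ` but not in
that of `φ`, then `t * g * t⁻¹ * (ψ g)⁻¹` is therefore a nontrivial element of the kernel.
On the other hand, a pro-monomorphic sequence of surjections consists of isomorphisms from some
index on: elements of `ker λ_{i,j}` lift to `ker λ_{i,k} = ker λ_{j,k}`, hence are trivial.
-/

section InverseSequence

variable {G : ℕ → Type u} [∀ i, Group (G i)] (lam : ∀ i, G (i + 1) →* G i)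

theorem invSeqComp_self (i : ℕ) : invSeqComp lam (le_refl i) = MonoidHom.id (G i) :=
  Nat.leRecOn_self _

theorem invSeqComp_succ {i j : ℕ} (hij : i ≤ j) :
    invSeqComp lam (hij.trans j.le_succ) = (invSeqComp lam hij).comp (lam j) :=
  Nat.leRecOn_succ hij _

theorem invSeqComp_self_succ (i : ℕ) : invSeqComp lam i.le_succ = lam i := by
  rw [invSeqComp_succ lam le_rfl, invSeqComp_self, MonoidHom.id_comp]

theorem invSeqComp_comp_invSeqComp {i j k : ℕ} (hij : i ≤ j) (hjk : j ≤ k) :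
    (invSeqComp lam hij).comp (invSeqComp lam hjk) = invSeqComp lam (hij.trans hjk) := by
  induction k, hjk using Nat.le_induction with
  | base => rw [invSeqComp_self, MonoidHom.comp_id]
  | succ k hjk ih =>
    rw [invSeqComp_succ lam hjk, invSeqComp_succ lam (hij.trans hjk), ← ih, MonoidHom.comp_assoc]

variable {lam}

theorem invSeqComp_surjective (hsurj : ∀ i, Function.Surjective (lam i)) {i j : ℕ} (hij : i ≤ j) :
    Function.Surjective (invSeqComp lam hij) := by
  induction j, hij using Nat.le_induction with
  | base =>
    rw [invSeqComp_self]
    exact Function.surjective_id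
  | succ j hij ih =>
    rw [invSeqComp_succ lam hij, MonoidHom.coe_comp]
    exact ih.comp (hsurj j)

theorem ProMono.exists_injective_invSeqComp (hpro : ProMono lam)
    (hsurj : ∀ i, Function.Surjective (lam i)) :
    ∃ i, ∀ j, ∀ hij : i ≤ j, Function.Injective (invSeqComp lam hij) := by
  obtain ⟨i, hi⟩ := hpro
  refine ⟨i, fun j hij => (injective_iff_map_eq_one _).2 fun x hx => ?_⟩
  obtain ⟨k, hjk, hker⟩ := hi j hij
  obtain ⟨y, rfl⟩ := invSeqComp_surjective hsurj hjk x
  have hy : y ∈ (invSeqComp lam (hij.trans hjk)).ker := by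
    rwa [← invSeqComp_comp_invSeqComp lam hij hjk, MonoidHom.mem_ker]
  rwa [hker k le_rfl] at hy

theorem not_proMono_of_surjective_of_not_injective (hsurj : ∀ i, Function.Surjective (lam i))
    (hinj : ∀ i, ¬ Function.Injective (lam i)) : ¬ ProMono lam := by
  intro hpro
  obtain ⟨i, hi⟩ := hpro.exists_injective_invSeqComp hsurj
  exact hinj i (invSeqComp_self_succ lam i ▸ hi (i + 1) i.le_succ)

end InverseSequence

section HNNExtension

open HNNExtension

variable {G : Type*} [Group G] {A B A' B' : Subgroup G} {φ : A ≃* B} {ψ : A' ≃* B'}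

theorem hnnExtension_t_mul_of_mul_inv_t_mem_range_of_iff {g : G} :
    (t * of g * t⁻¹ : HNNExtension G A B φ) ∈ (of : G →* HNNExtension G A B φ).range ↔ g ∈ A := by
  refine ⟨fun hrange => ?_, fun hg => ⟨φ ⟨g, hg⟩, equiv_eq_conj ⟨g, hg⟩⟩⟩
  by_contra hg
  let w : NormalWord.ReducedWord G A B :=
    { head := 1
      toList := [(1, g), (-1, 1)]
      chain := by simp [hg] }
  have hw : w.prod φ = t * of g * t⁻¹ := by simp [w, NormalWord.ReducedWord.prod, mul_assoc]
  exact List.cons_ne_nil _ _ (ReducedWord.toList_eq_nil_of_mem_of_range φ w (hw ▸ hrange))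

theorem hnnExtension_surjective_of_mem_range {H : Type*} [Group H] {f : H →* HNNExtension G A B φ}
    (hof : ∀ g, of g ∈ f.range) (ht : t ∈ f.range) : Function.Surjective f := by
  intro x
  rw [← MonoidHom.mem_range]
  induction x using HNNExtension.induction_on with
  | of g => exact hof g
  | t => exact ht
  | mul x y hx hy => exact mul_mem hx hy
  | inv x hx => exact inv_mem hx

theorem hnnExtension_le_of_injective {f : HNNExtension G A B φ →* HNNExtension G A' B' ψ}
    (hof : ∀ g, f (of g) = of g) (ht : f t = t) (hf : Function.Injective f) : A' ≤ A := by
  intro g hg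
  obtain ⟨b, hb⟩ := (hnnExtension_t_mul_of_mul_inv_t_mem_range_of_iff (φ := ψ)).2 hg
  have hconj : f (of b) = f (t * of g * t⁻¹) := by
    simpa only [map_mul, map_inv, hof, ht] using hb
  exact (hnnExtension_t_mul_of_mul_inv_t_mem_range_of_iff (φ := φ)).1 ⟨b, hf hconj⟩

end HNNExtension

theorem twoPowSubgroup_le_iff {i j : ℕ} : twoPowSubgroup i ≤ twoPowSubgroup j ↔ j ≤ i := by
  have hdvd : twoPowSubgroup i ≤ twoPowSubgroup j ↔ (2 : ℤ) ^ j ∣ 2 ^ i := by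
    rw [twoPowSubgroup, Subgroup.zpowers_le]
    exact Int.mem_zmultiples_iff
  rw [hdvd, pow_dvd_pow_iff two_ne_zero (by decide)]

theorem HNN_sequence_of_identity_not_proMono_general {G : Type*} [Group G] {A B : ℕ → Subgroup G}
    {φ : ∀ i, A i ≃* B i} (hA : ∀ i, ¬ A i ≤ A (i + 1))
    (lamBar : ∀ i, HNNExtension G (A (i + 1)) (B (i + 1)) (φ (i + 1)) →*
      HNNExtension G (A i) (B i) (φ i))
    (hBarOf : ∀ i g, lamBar i (HNNExtension.of g) = HNNExtension.of g)
    (hBarT : ∀ i, lamBar i HNNExtension.t = HNNExtension.t) :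
    (∀ i, Function.Surjective (lamBar i) ∧ ¬ Function.Injective (lamBar i)) ∧
      ¬ ProMono (G := fun i => HNNExtension G (A i) (B i) (φ i)) lamBar := by
  have hsurj (i : ℕ) : Function.Surjective (lamBar i) :=
    hnnExtension_surjective_of_mem_range (fun g => ⟨_, hBarOf i g⟩) ⟨_, hBarT i⟩
  have hinj (i : ℕ) : ¬ Function.Injective (lamBar i) := fun h =>
    hA i (hnnExtension_le_of_injective (hBarOf i) (hBarT i) h)
  exact ⟨fun i => ⟨hsurj i, hinj i⟩, not_proMono_of_surjective_of_not_injective hsurj hinj⟩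

/-- Let `φ_i` be the identity isomorphism of the subgroup `2^iℤ ≤ ℤ`, and
let `ℤ∗_{φ_i}` be the corresponding HNN extension.  The homomorphisms
`λ̄_i : ℤ∗_{φ_i} →* ℤ∗_{φ_{i-1}}` induced by the identity map of `ℤ` (restricting to the
identity on `ℤ` and sending stable letter to stable letter) are all surjective but not
injective, and the resulting inverse sequence `{ℤ∗_{φ_i}, λ̄_i}` is not pro-monomorphic. -/
theorem HNN_sequence_of_identity_not_proMono
    (lamBar : ∀ i : ℕ, HNNExtension (Multiplicative ℤ) (twoPowSubgroup (i + 1))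
        (twoPowSubgroup (i + 1)) (MulEquiv.refl _) →*
      HNNExtension (Multiplicative ℤ) (twoPowSubgroup i) (twoPowSubgroup i) (MulEquiv.refl _))
    (hBarOf : ∀ (i : ℕ) (g : Multiplicative ℤ),
      lamBar i (HNNExtension.of g) = HNNExtension.of g)
    (hBarT : ∀ i : ℕ, lamBar i HNNExtension.t = HNNExtension.t) :
    (∀ i : ℕ, Function.Surjective (lamBar i) ∧ ¬ Function.Injective (lamBar i)) ∧
      ¬ ProMono (G := fun i => HNNExtension (Multiplicative ℤ) (twoPowSubgroup i)
        (twoPowSubgroup i) (MulEquiv.refl _)) lamBar :=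
  HNN_sequence_of_identity_not_proMono_general (φ := fun i => MulEquiv.refl (twoPowSubgroup i))
    (fun i => twoPowSubgroup_le_iff.not.2 i.not_succ_le_self) lamBar hBarOf hBarT
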